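/- Let A = (Q, X, q₀, T, F) be an updateable timed automaton, consider the Kleene iteration {G^i(q)} with the red/green colouring, and let K = 1 + |Q|·|X|·(|X|+1). If there exists a state p ∈ Q such that G^K(p) is red, then there is no i such that G^i(q) is green for all q ∈ Q. -/

import Mathlib

open scoped NNReal

/-! ## Atomic constraints over a set of clocks -/

/-- Comparison operator `◁ ∈ {<, ≤}`. -/
inductive Ineq : Type where
  | lt : Ineq
  | le : Ineq
deriving DecidableEq

/-- Interpretation of a comparison operator on reals. -/
def Ineq.holds : Ineq → ℝ → ℝ → Prop
  | .lt, a, b => a < b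
  | .le, a, b => a ≤ b

/-- Atomic constraints over clocks `X`:
`upper x o c` is `x ◁ c` (c ∈ ℕ), `lower c o x` is `c ◁ x` (c ∈ ℕ),
`diag x y o d` is `x - y ◁ d` (d ∈ ℤ). -/
inductive Constr (X : Type) : Type where
  | upper : X → Ineq → ℕ → Constr X
  | lower : ℕ → Ineq → X → Constr X
  | diag : X → X → Ineq → ℤ → Constr X
deriving DecidableEq

namespace Constr

/-- Is the constraint a diagonal constraint `x - y ◁ d`? -/
def isDiag {X : Type} : Constr X → Bool
  | .diag _ _ _ _ => true
  | _ => false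

/-- The integer constant of a constraint. -/
def constOf {X : Type} : Constr X → ℤ
  | .upper _ _ c => (c : ℤ)
  | .lower c _ _ => (c : ℤ)
  | .diag _ _ _ d => d

/-- Satisfaction of a constraint by a clock valuation `v : X → ℝ≥0`. -/
def sat {X : Type} (v : X → ℝ≥0) : Constr X → Prop
  | .upper x o c => o.holds (v x : ℝ) (c : ℝ)
  | .lower c o x => o.holds (c : ℝ) (v x : ℝ)
  | .diag x y o d => o.holds ((v x : ℝ) - (v y : ℝ)) (d : ℝ)

end Constr

/-- Time elapse: `v + δ`. -/
def shift {X : Type} (v : X → ℝ≥0) (δ : ℝ≥0) : X → ℝ≥0 := fun x => v x + δ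

/-- The relation `v ⊑_G v'`: for all `φ ∈ G` and all delays `δ ≥ 0`,
`v + δ ⊨ φ` implies `v' + δ ⊨ φ`. -/
def simG {X : Type} (G : Set (Constr X)) (v v' : X → ℝ≥0) : Prop :=
  ∀ φ ∈ G, ∀ δ : ℝ≥0, Constr.sat (shift v δ) φ → Constr.sat (shift v' δ) φ

/-- `Z ⊑_G Z'` on sets of valuations. -/
def simGZ {X : Type} (G : Set (Constr X)) (Z Z' : Set (X → ℝ≥0)) : Prop :=
  ∀ v ∈ Z, ∃ v' ∈ Z', simG G v v'

open Classical in
/-- `[R]v`: reset the clocks in `R` to `0`. -/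
noncomputable def reset {X : Type} (R : Set X) (v : X → ℝ≥0) : X → ℝ≥0 :=
  fun x => if x ∈ R then 0 else v x

/-- Weakest precondition `wp(⊑_φ, R)` of a single constraint over a reset. -/
def wpReset {X : Type} (R : Set X) : Constr X → Set (Constr X)
  | .upper x o c => {ψ | x ∉ R ∧ ψ = .upper x o c}
  | .lower c o x => {ψ | x ∉ R ∧ ψ = .lower c o x}
  | .diag x y o d =>
      {ψ | (x ∉ R ∧ y ∉ R ∧ ψ = .diag x y o d) ∨
           (x ∉ R ∧ y ∈ R ∧ 0 ≤ d ∧ ψ = .upper x o d.toNat) ∨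
           (x ∈ R ∧ y ∉ R ∧ 0 ≤ -d ∧ ψ = .lower (-d).toNat o y)}

/-- Weakest precondition `wp(⊑_G, R)` of a set of constraints over a reset. -/
def wpResetSet {X : Type} (R : Set X) (G : Set (Constr X)) : Set (Constr X) :=
  ⋃ φ ∈ G, wpReset R φ

/-! ## Timed automata -/

/-- A transition: source state, guard (finite conjunction of constraints),
reset set, target state. -/
abbrev TTrans (Q X : Type) : Type := Q × Finset (Constr X) × Set X × Q

def TTrans.src {Q X : Type} (t : TTrans Q X) : Q := t.1
def TTrans.grd {Q X : Type} (t : TTrans Q X) : Finset (Constr X) := t.2.1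
def TTrans.rst {Q X : Type} (t : TTrans Q X) : Set X := t.2.2.1
def TTrans.tgt {Q X : Type} (t : TTrans Q X) : Q := t.2.2.2

/-- A timed automaton. -/
structure TA (Q X : Type) : Type where
  init : Q
  trans : Finset (TTrans Q X)
  acc : Set Q

/-- Action step of a timed automaton along transition `t`. -/
def Step {Q X : Type} (A : TA Q X) (t : TTrans Q X) (c c' : Q × (X → ℝ≥0)) : Prop :=
  t ∈ A.trans ∧ TTrans.src t = c.1 ∧ (∀ φ ∈ TTrans.grd t, Constr.sat c.2 φ) ∧
    c'.1 = TTrans.tgt t ∧ c'.2 = reset (TTrans.rst t) c.2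

/-- `r` is a simulation on the configurations of `A`: a reflexive transitive
relation, relating only configurations with equal states, compatible with
delays and action transitions. -/
def IsSimulation {Q X : Type} (A : TA Q X)
    (r : (Q × (X → ℝ≥0)) → (Q × (X → ℝ≥0)) → Prop) : Prop :=
  Reflexive r ∧ Transitive r ∧
  ∀ q v q' v', r (q, v) (q', v') →
    q = q' ∧
    (∀ δ : ℝ≥0, ∃ δ' : ℝ≥0, r (q, shift v δ) (q, shift v' δ')) ∧
    (∀ t c₁, Step A t (q, v) c₁ →
      ∃ v₁', Step A t (q, v') (c₁.1, v₁') ∧ r c₁ (c₁.1, v₁'))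

/-- The state-based guard equations:
`G(q) = ⋃_{(q,g,R,q₁) ∈ T} ({g} ∪ wp(⊑_{G(q₁)}, R))`. -/
def GuardEq {Q X : Type} (A : TA Q X) (G : Q → Set (Constr X)) : Prop :=
  ∀ q, G q = ⋃ t ∈ A.trans, ⋃ (_ : TTrans.src t = q),
    ((TTrans.grd t : Set (Constr X)) ∪ wpResetSet (TTrans.rst t) (G (TTrans.tgt t)))

/-! ## LU bounds -/

def lowerConstAt {X : Type} [DecidableEq X] (x : X) : Constr X → WithBot ℕ
  | .lower c _ y => if y = x then (c : WithBot ℕ) else ⊥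
  | _ => ⊥

def upperConstAt {X : Type} [DecidableEq X] (x : X) : Constr X → WithBot ℕ
  | .upper y _ c => if y = x then (c : WithBot ℕ) else ⊥
  | _ => ⊥

/-- `L_G(x)`: maximum constant among lower-bound constraints `c ◁ x` in `G`
(`⊥ = -∞` if none). -/
def Lbound {X : Type} [DecidableEq X] (G : Finset (Constr X)) (x : X) : WithBot ℕ :=
  G.sup (lowerConstAt x)

/-- `U_G(x)`: maximum constant among upper-bound constraints `x ◁ c` in `G`
(`⊥ = -∞` if none). -/
def Ubound {X : Type} [DecidableEq X] (G : Finset (Constr X)) (x : X) : WithBot ℕ :=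
  G.sup (upperConstAt x)

/-- The LU simulation `v ≼_LU v'` for bounds functions `L U : X → ℕ ∪ {-∞}`. -/
def luSim {X : Type} (L U : X → WithBot ℕ) (v v' : X → ℝ≥0) : Prop :=
  ∀ x : X,
    (v' x < v x → (L x).map (fun c : ℕ => (c : ℝ)) < ((v' x : ℝ) : WithBot ℝ)) ∧
    (v x < v' x → (U x).map (fun c : ℕ => (c : ℝ)) < ((v x : ℝ) : WithBot ℝ))

/-- The relation `v ⊑^LU_G v'`: `v ≼_{LU(G)} v'` and every diagonal constraint
of `G` satisfied by `v` is satisfied by `v'`. -/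
def luglu {X : Type} [DecidableEq X] (G : Finset (Constr X)) (v v' : X → ℝ≥0) : Prop :=
  luSim (Lbound G) (Ubound G) v v' ∧
    ∀ φ ∈ G, φ.isDiag → Constr.sat v φ → Constr.sat v' φ

/-- Lifting a relation on valuations to sets of valuations. -/
def zoneRel {X : Type} (r : (X → ℝ≥0) → (X → ℝ≥0) → Prop) (Z Z' : Set (X → ℝ≥0)) : Prop :=
  ∀ v ∈ Z, ∃ v' ∈ Z', r v v'

/-! ## Runs of timed automata -/

/-- `stepsFrom A c l`: the alternating delay-action sequence `l` is a valid
sequence of steps of `A` starting at configuration `c`. -/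
def stepsFrom {Q X : Type} (A : TA Q X) :
    (Q × (X → ℝ≥0)) → List (ℝ≥0 × TTrans Q X) → Prop
  | _, [] => True
  | c, (δ, t) :: l =>
      t ∈ A.trans ∧ TTrans.src t = c.1 ∧
      (∀ φ ∈ TTrans.grd t, Constr.sat (shift c.2 δ) φ) ∧
      stepsFrom A (TTrans.tgt t, reset (TTrans.rst t) (shift c.2 δ)) l

/-- Configuration reached after a sequence of delay-action steps. -/
noncomputable def endConfig {Q X : Type} :
    (Q × (X → ℝ≥0)) → List (ℝ≥0 × TTrans Q X) → (Q × (X → ℝ≥0))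
  | c, [] => c
  | c, (δ, t) :: l => endConfig (TTrans.tgt t, reset (TTrans.rst t) (shift c.2 δ)) l

/-- A run of `A`: a valid sequence of delay-action steps from `(q₀, 0̄)`. -/
def TA.Run {Q X : Type} (A : TA Q X) : Type :=
  {l : List (ℝ≥0 × TTrans Q X) // stepsFrom A (A.init, fun _ => 0) l}

/-- A run is accepting if it ends in an accepting state. -/
def TA.Accepting {Q X : Type} (A : TA Q X) (r : A.Run) : Prop :=
  (endConfig (A.init, fun _ => 0) r.val).1 ∈ A.acc

/-- `A` is diagonal-free: no guard contains a diagonal constraint. -/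
def DiagFree {Q X : Type} (A : TA Q X) : Prop :=
  ∀ t ∈ A.trans, ∀ φ ∈ TTrans.grd t, ¬ φ.isDiag

/-- The (finite) set of diagonal constraints occurring in guards of `A`. -/
def diagGuards {Q X : Type} [DecidableEq X] (A : TA Q X) : Finset (Constr X) :=
  A.trans.biUnion fun t => (TTrans.grd t).filter fun φ => φ.isDiag

/-! ## Updateable timed automata -/

/-- Atomic update of a clock: `x := c` or `x := y + d`. -/
inductive AtomicUp (X : Type) : Type where
  | const : ℕ → AtomicUp X
  | add : X → ℤ → AtomicUp X
deriving DecidableEq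

/-- `up(v) : X → ℝ` (may be negative). -/
def applyUpd {X : Type} (up : X → AtomicUp X) (v : X → ℝ≥0) : X → ℝ :=
  fun x => match up x with
    | .const c => (c : ℝ)
    | .add y d => (v y : ℝ) + (d : ℝ)

/-- Weakest precondition `wp(⊑_φ, up)` of a single constraint over an update. -/
def wpUpd {X : Type} [DecidableEq X] (up : X → AtomicUp X) : Constr X → Set (Constr X)
  | .upper x o c =>
      match up x with
      | .const _ => ∅
      | .add y d => if 0 ≤ (c : ℤ) - d then {Constr.upper y o ((c : ℤ) - d).toNat} else ∅
  | .lower c o x =>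
      match up x with
      | .const _ => ∅
      | .add y d => if 0 ≤ (c : ℤ) - d then {Constr.lower ((c : ℤ) - d).toNat o y} else ∅
  | .diag x y o c =>
      match up x, up y with
      | .const _, .const _ => ∅
      | .add y₁ d₁, .const c₂ =>
          if 0 ≤ c + (c₂ : ℤ) - d₁ then {Constr.upper y₁ o (c + (c₂ : ℤ) - d₁).toNat} else ∅
      | .const c₁, .add y₂ d₂ =>
          if 0 ≤ (c₁ : ℤ) - d₂ - c then {Constr.lower ((c₁ : ℤ) - d₂ - c).toNat o y₂} else ∅
      | .add y₁ d₁, .add y₂ d₂ =>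
          if y₁ = y₂ then ∅ else {Constr.diag y₁ y₂ o (c - d₁ + d₂)}

/-- Weakest precondition `wp(⊑_G, up)` of a set of constraints over an update. -/
def wpUpdSet {X : Type} [DecidableEq X] (up : X → AtomicUp X) (G : Set (Constr X)) :
    Set (Constr X) :=
  ⋃ φ ∈ G, wpUpd up φ

/-- The set of constraints `{0 ≤ x | x ∈ X}`. -/
def nonnegConstrs (X : Type) : Set (Constr X) := {φ | ∃ x : X, φ = Constr.lower 0 Ineq.le x}

/-- A transition of an updateable timed automaton: source, guard, update, target. -/
abbrev UTrans (Q X : Type) : Type := Q × Finset (Constr X) × (X → AtomicUp X) × Q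

def UTrans.src {Q X : Type} (t : UTrans Q X) : Q := t.1
def UTrans.grd {Q X : Type} (t : UTrans Q X) : Finset (Constr X) := t.2.1
def UTrans.upd {Q X : Type} (t : UTrans Q X) : X → AtomicUp X := t.2.2.1
def UTrans.tgt {Q X : Type} (t : UTrans Q X) : Q := t.2.2.2

/-- An updateable timed automaton. -/
structure UTA (Q X : Type) : Type where
  init : Q
  trans : Finset (UTrans Q X)
  acc : Set Q

/-- Action step of an updateable timed automaton along transition `t`:
the guard holds, `up(v) ≥ 0`, and the new valuation is `up(v)`. -/
def UStep {Q X : Type} (A : UTA Q X) (t : UTrans Q X) (c c' : Q × (X → ℝ≥0)) : Prop :=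
  t ∈ A.trans ∧ UTrans.src t = c.1 ∧ (∀ φ ∈ UTrans.grd t, Constr.sat c.2 φ) ∧
    c'.1 = UTrans.tgt t ∧ ∀ x, (c'.2 x : ℝ) = applyUpd (UTrans.upd t) c.2 x

/-- `r` is a simulation on configurations of an updateable timed automaton. -/
def IsSimulationU {Q X : Type} (A : UTA Q X)
    (r : (Q × (X → ℝ≥0)) → (Q × (X → ℝ≥0)) → Prop) : Prop :=
  Reflexive r ∧ Transitive r ∧
  ∀ q v q' v', r (q, v) (q', v') →
    q = q' ∧
    (∀ δ : ℝ≥0, ∃ δ' : ℝ≥0, r (q, shift v δ) (q, shift v' δ')) ∧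
    (∀ t c₁, UStep A t (q, v) c₁ →
      ∃ v₁', UStep A t (q, v') (c₁.1, v₁') ∧ r c₁ (c₁.1, v₁'))

/-- State-based guard equations for updateable timed automata. -/
def GuardEqU {Q X : Type} [DecidableEq X] (A : UTA Q X) (G : Q → Set (Constr X)) : Prop :=
  ∀ q, G q = ⋃ t ∈ A.trans, ⋃ (_ : UTrans.src t = q),
    ((UTrans.grd t : Set (Constr X)) ∪ wpUpdSet (UTrans.upd t) (nonnegConstrs X)
      ∪ wpUpdSet (UTrans.upd t) (G (UTrans.tgt t)))

/-- Kleene iterates `G^i(q)` of the state-based guard equations. -/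
def iterG {Q X : Type} [DecidableEq X] (A : UTA Q X) : ℕ → Q → Set (Constr X)
  | 0 => fun q => ⋃ t ∈ A.trans, ⋃ (_ : UTrans.src t = q),
      ((UTrans.grd t : Set (Constr X)) ∪ wpUpdSet (UTrans.upd t) (nonnegConstrs X))
  | (i + 1) => fun q => iterG A i q ∪
      (⋃ t ∈ A.trans, ⋃ (_ : UTrans.src t = q),
        wpUpdSet (UTrans.upd t) (iterG A i (UTrans.tgt t)))

/-- `G^{i+1}(q)` is coloured red: a new diagonal constraint was added, or a new
non-diagonal constraint whose constant is strictly bigger than the constant of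
every non-diagonal constraint of the same kind on the same clock in `G^i(q)`. -/
def RedAt {Q X : Type} [DecidableEq X] (A : UTA Q X) : ℕ → Q → Prop
  | 0, _ => False
  | (i + 1), q =>
      (∃ φ : Constr X, φ ∈ iterG A (i + 1) q ∧ φ ∉ iterG A i q ∧ φ.isDiag) ∨
      (∃ (x : X) (o : Ineq) (c : ℕ),
        Constr.upper x o c ∈ iterG A (i + 1) q ∧ Constr.upper x o c ∉ iterG A i q ∧
        ∀ (o' : Ineq) (c' : ℕ), Constr.upper x o' c' ∈ iterG A i q → c' < c) ∨
      (∃ (x : X) (o : Ineq) (c : ℕ),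
        Constr.lower c o x ∈ iterG A (i + 1) q ∧ Constr.lower c o x ∉ iterG A i q ∧
        ∀ (o' : Ineq) (c' : ℕ), Constr.lower c' o' x ∈ iterG A i q → c' < c)

/-- `G^i(q)` is coloured green. -/
def GreenAt {Q X : Type} [DecidableEq X] (A : UTA Q X) (i : ℕ) (q : Q) : Prop :=
  ¬ RedAt A i q

/-- Absolute value of the constant of an atomic update. -/
def updBound {X : Type} : AtomicUp X → ℕ
  | .const c => c
  | .add _ d => d.natAbs

/-! ## The statement -/


/-! ## Proof -/

/-- Shape of a constraint: its clocks and its kind. -/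
def shp {X : Type} : Constr X → (X ⊕ X) ⊕ (X × X)
  | .upper x _ _ => .inl (.inl x)
  | .lower _ _ x => .inl (.inr x)
  | .diag x y _ _ => .inr (x, y)

def opOf {X : Type} : Constr X → Ineq
  | .upper _ o _ => o
  | .lower _ o _ => o
  | .diag _ _ o _ => o

def isUp {X : Type} : Constr X → Bool
  | .upper _ _ _ => true
  | _ => false

/-- Key used for the pigeonhole argument: the shape without the upper/lower flag. -/
def keyOf {X : Type} : Constr X → X ⊕ (X × X)
  | .upper x _ _ => .inl x
  | .lower _ _ x => .inl x
  | .diag x y _ _ => .inr (x, y)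

/-- Shift the constant by `e`. -/
def addC {X : Type} (e : ℤ) : Constr X → Constr X
  | .upper x o c => .upper x o ((c : ℤ) + e).toNat
  | .lower c o x => .lower ((c : ℤ) + e).toNat o x
  | .diag x y o c => .diag x y o (c + e)

def Ok {X : Type} (e : ℤ) (φ : Constr X) : Prop := 0 ≤ e ∨ φ.isDiag = true

/-- One step of the iteration, at the level of constraints. -/
def StepR {Q X : Type} [DecidableEq X] (A : UTA Q X) (a b : Q × Constr X) : Prop :=
  ∃ t ∈ A.trans, UTrans.src t = b.1 ∧ UTrans.tgt t = a.1 ∧ b.2 ∈ wpUpd (UTrans.upd t) a.2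

def Wit {Q X : Type} [DecidableEq X] (A : UTA Q X) (i : ℕ) (a : Q × Constr X) : Prop :=
  a.2 ∈ iterG A (i + 1) a.1 ∧ a.2 ∉ iterG A i a.1 ∧
    (a.2.isDiag = false → ∀ ψ ∈ iterG A i a.1, shp ψ = shp a.2 → ψ.constOf < a.2.constOf)

theorem wp_shift {X : Type} [DecidableEq X] (up : X → AtomicUp X) (φ φ' : Constr X)
    (h : φ' ∈ wpUpd up φ) (hd : φ.isDiag = φ'.isDiag) (e : ℤ) (he : Ok e φ) :
    addC e φ' ∈ wpUpd up (addC e φ) := by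
  rcases φ with ⟨x, o, c⟩ | ⟨c, o, x⟩ | ⟨x, y, o, c⟩
  · simp only [wpUpd, addC, Ok, Constr.isDiag] at *
    cases hx : up x with
    | const _ => simp [hx] at h
    | add z d =>
      simp only [hx] at h ⊢
      split_ifs at h with h1
      · simp at h
        subst h
        have : 0 ≤ e := by simpa using he
        rw [if_pos (by omega)]
        simp [addC]; omega
      · simp at h
  · simp only [wpUpd, addC, Ok, Constr.isDiag] at *
    cases hx : up x with
    | const _ => simp [hx] at h
    | add z d =>
      simp only [hx] at h ⊢
      split_ifs at h with h1
      · simp at h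
        subst h
        have : 0 ≤ e := by simpa using he
        rw [if_pos (by omega)]
        simp [addC]; omega
      · simp at h
  · simp only [wpUpd, addC] at *
    cases hx : up x <;> cases hy : up y <;> simp only [hx, hy] at h ⊢
    · simp at h
    · split_ifs at h
      · simp at h; subst h; simp [Constr.isDiag] at hd
      · simp at h
    · split_ifs at h
      · simp at h; subst h; simp [Constr.isDiag] at hd
      · simp at h
    · split_ifs at h with h1
      · simp at h
      · simp at h; subst h
        rw [if_neg h1]
        simp [addC]; omega

theorem wp_op {X : Type} [DecidableEq X] (up : X → AtomicUp X) (φ φ' : Constr X)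
    (h : φ' ∈ wpUpd up φ) : opOf φ' = opOf φ ∧
      (φ.isDiag = false → φ'.isDiag = false ∧ isUp φ' = isUp φ) := by
  rcases φ with ⟨x, o, c⟩ | ⟨c, o, x⟩ | ⟨x, y, o, c⟩
  · simp only [wpUpd] at h
    cases hx : up x <;> simp only [hx] at h
    · simp at h
    · split_ifs at h <;> simp at h
      subst h; simp [opOf, Constr.isDiag, isUp]
  · simp only [wpUpd] at h
    cases hx : up x <;> simp only [hx] at h
    · simp at h
    · split_ifs at h <;> simp at h
      subst h; simp [opOf, Constr.isDiag, isUp]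
  · simp only [wpUpd] at h
    cases hx : up x <;> cases hy : up y <;> simp only [hx, hy] at h
    · simp at h
    all_goals
      split_ifs at h <;> simp at h
      subst h; simp [opOf, Constr.isDiag]

/-- Domination is preserved by `wp`. -/
theorem wp_mono {X : Type} [DecidableEq X] (up : X → AtomicUp X) (φ φ' ψ : Constr X)
    (h : φ' ∈ wpUpd up φ) (hd : φ.isDiag = false) (hs : shp ψ = shp φ)
    (hc : φ.constOf ≤ ψ.constOf) :
    ∃ ψ' ∈ wpUpd up ψ, shp ψ' = shp φ' ∧ φ'.constOf ≤ ψ'.constOf := by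
  rcases φ with ⟨x, o, c⟩ | ⟨c, o, x⟩ | ⟨x, y, o, c⟩ <;>
  rcases ψ with ⟨x', o', c'⟩ | ⟨c', o', x'⟩ | ⟨x', y', o', c'⟩ <;>
  simp [shp, Constr.isDiag] at hs hd
  all_goals
    subst hs
    simp only [wpUpd, Constr.constOf] at *
    cases hx : up x' <;> simp only [hx] at h ⊢
    · simp at h
    · split_ifs at h <;> simp at h
      subst h
      rw [if_pos (by omega)]
      refine ⟨_, Set.mem_singleton _, rfl, ?_⟩
      simp [Constr.constOf]; omega

section
variable {Q X : Type} [DecidableEq X] (A : UTA Q X)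

theorem mem_iterG_succ (i : ℕ) (q : Q) (φ : Constr X) :
    φ ∈ iterG A (i + 1) q ↔ φ ∈ iterG A i q ∨
      ∃ a : Q × Constr X, a.2 ∈ iterG A i a.1 ∧ StepR A a (q, φ) := by
  simp only [iterG, wpUpdSet, Set.mem_union, Set.mem_iUnion, StepR]
  constructor
  · rintro (h | ⟨t, ht, hq, ψ, hψ, h⟩)
    · exact .inl h
    · exact .inr ⟨(UTrans.tgt t, ψ), hψ, t, ht, hq, rfl, h⟩
  · rintro (h | ⟨a, ha, t, ht, hq, hq', h⟩)
    · exact .inl h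
    · exact .inr ⟨t, ht, hq, a.2, hq' ▸ ha, h⟩

theorem iterG_mono {i j : ℕ} (h : i ≤ j) (q : Q) : iterG A i q ⊆ iterG A j q := by
  induction h with
  | refl => exact subset_rfl
  | step _ ih => exact fun φ hφ => (mem_iterG_succ A _ _ _).2 (.inl (ih hφ))

theorem wit_step (i : ℕ) (b : Q × Constr X) (h : Wit A (i + 1) b) :
    ∃ a, Wit A i a ∧ StepR A a b := by
  obtain ⟨h1, h2, h3⟩ := h
  rcases (mem_iterG_succ A _ _ _).1 h1 with h | ⟨a, ha, hab⟩
  · exact absurd h h2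
  refine ⟨a, ⟨ha, fun hn => h2 ((mem_iterG_succ A _ _ _).2 (.inr ⟨a, hn, hab⟩)), ?_⟩, hab⟩
  intro hd ψ hψ hs
  by_contra hc
  push Not at hc
  obtain ⟨t, ht, hq, hq', hw⟩ := hab
  obtain ⟨ψ', hψ', hs', hc'⟩ := wp_mono _ _ _ ψ hw hd hs hc
  have := h3 ((wp_op _ _ _ hw).2 hd).1 ψ'
    ((mem_iterG_succ A _ _ _).2 (.inr ⟨(a.1, ψ), hψ, t, ht, hq, hq', hψ'⟩)) hs'
  exact absurd this (not_lt.2 hc')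

theorem red_iff (i : ℕ) (q : Q) : RedAt A (i + 1) q ↔ ∃ φ, Wit A i (q, φ) := by
  constructor
  · rintro (⟨φ, h1, h2, h3⟩ | ⟨x, o, c, h1, h2, h3⟩ | ⟨x, o, c, h1, h2, h3⟩)
    · exact ⟨φ, h1, h2, by simp [h3]⟩
    · refine ⟨_, h1, h2, ?_⟩
      rintro - (⟨x', o', c'⟩ | ⟨c', o', x'⟩ | ⟨x', y', o', c'⟩) hψ hs <;> simp [shp] at hs
      subst hs
      simpa [Constr.constOf] using h3 _ _ hψ
    · refine ⟨_, h1, h2, ?_⟩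
      rintro - (⟨x', o', c'⟩ | ⟨c', o', x'⟩ | ⟨x', y', o', c'⟩) hψ hs <;> simp [shp] at hs
      subst hs
      simpa [Constr.constOf] using h3 _ _ hψ
  · rintro ⟨(⟨x, o, c⟩ | ⟨c, o, x⟩ | ⟨x, y, o, c⟩), h1, h2, h3⟩
    · refine .inr (.inl ⟨x, o, c, h1, h2, fun o' c' h => ?_⟩)
      simpa [Constr.constOf] using h3 rfl _ h rfl
    · refine .inr (.inr ⟨x, o, c, h1, h2, fun o' c' h => ?_⟩)
      simpa [Constr.constOf] using h3 rfl _ h rfl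
    · exact .inl ⟨_, h1, h2, rfl⟩

theorem chain (n : ℕ) (b : Q × Constr X) (h : Wit A n b) :
    ∃ f : ℕ → Q × Constr X, f n = b ∧ (∀ i ≤ n, Wit A i (f i)) ∧
      ∀ i < n, StepR A (f i) (f (i + 1)) := by
  induction n generalizing b with
  | zero =>
    refine ⟨fun _ => b, rfl, fun i hi => ?_, fun i hi => by omega⟩
    obtain rfl : i = 0 := by omega
    exact h
  | succ n ih =>
    obtain ⟨a, ha, hab⟩ := wit_step A n b h
    obtain ⟨f, hf, hw, hs⟩ := ih a ha
    refine ⟨fun i => if i ≤ n then f i else b, by simp, fun i hi => ?_, fun i hi => ?_⟩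
    · by_cases h' : i ≤ n
      · simpa [h'] using hw i h'
      · obtain rfl : i = n + 1 := by omega
        simpa using h
    · by_cases h' : i < n
      · have h2 : i + 1 ≤ n := h'
        simpa [h'.le, h2] using hs i h'
      · obtain rfl : i = n := by omega
        simpa [hf] using hab

theorem star_op {a b : Q × Constr X} (h : Relation.ReflTransGen (StepR A) a b) :
    opOf b.2 = opOf a.2 ∧
      (a.2.isDiag = false → b.2.isDiag = false ∧ isUp b.2 = isUp a.2) := by
  induction h with
  | refl => simp
  | tail _ hs ih =>
    obtain ⟨t, _, _, _, hw⟩ := hs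
    have := wp_op _ _ _ hw
    refine ⟨this.1.trans ih.1, fun h => ?_⟩
    have h1 := ih.2 h
    have h2 := this.2 h1.1
    exact ⟨h2.1, h2.2.trans h1.2⟩

theorem star_shift {a b : Q × Constr X} (h : Relation.ReflTransGen (StepR A) a b)
    (hd : a.2.isDiag = b.2.isDiag) (e : ℤ) (he : Ok e a.2) :
    Relation.ReflTransGen (StepR A) (a.1, addC e a.2) (b.1, addC e b.2) := by
  induction h with
  | refl => exact .refl
  | @tail b c hab hs ih =>
    have h1 := star_op A hab
    obtain ⟨t, ht, hq, hq', hw⟩ := hs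
    have h2 := wp_op _ _ _ hw
    have hb : a.2.isDiag = b.2.isDiag := by
      cases ha : a.2.isDiag
      · exact (h1.2 ha).1.symm
      · cases hb : b.2.isDiag
        · have := (h2.2 hb).1
          simp_all
        · rfl
    refine (ih hb).tail ⟨t, ht, hq, hq', wp_shift _ _ _ hw (hb.symm.trans hd) e ?_⟩
    unfold Ok at *
    rwa [← hb]

theorem addC_addC (e e' : ℤ) (φ : Constr X) (h : Ok e φ) (h' : Ok e' φ) :
    addC e (addC e' φ) = addC (e' + e) φ := by
  cases φ <;> simp [addC, Ok, Constr.isDiag] at * <;> omega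

theorem addC_isDiag (e : ℤ) (φ : Constr X) : (addC e φ).isDiag = φ.isDiag := by
  cases φ <;> rfl

theorem addC_const (e : ℤ) (φ : Constr X) (h : Ok e φ) :
    (addC e φ).constOf = φ.constOf + e := by
  cases φ <;> simp [addC, Constr.constOf, Ok, Constr.isDiag] at * <;> omega

theorem Ok_mul (e : ℤ) (φ : Constr X) (h : Ok e φ) (n : ℕ) : Ok (n * e) φ := by
  rcases h with h | h
  · exact .inl (by positivity)
  · exact .inr h

theorem pump (q : Q) (φ : Constr X) (e : ℤ) (he : Ok e φ)
    (h : Relation.ReflTransGen (StepR A) (q, φ) (q, addC e φ)) (n : ℕ) :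
    Relation.ReflTransGen (StepR A) (q, φ) (q, addC (n * e) φ) := by
  induction n with
  | zero =>
    have : addC 0 φ = φ := by cases φ <;> simp [addC]
    simp [this]
    exact .refl
  | succ n ih =>
    have := star_shift A h (addC_isDiag e φ).symm (n * e) (Ok_mul e φ he n)
    simp only at this
    rw [addC_addC _ _ _ (Ok_mul e φ he n) he] at this
    refine ih.trans ?_
    convert this using 3
    push_cast; ring

theorem star_mem {a b : Q × Constr X} (h : Relation.ReflTransGen (StepR A) a b)
    (i : ℕ) (ha : a.2 ∈ iterG A i a.1) : ∃ j, b.2 ∈ iterG A j b.1 := by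
  induction h with
  | refl => exact ⟨i, ha⟩
  | @tail b c _ hs ih =>
    obtain ⟨j, hj⟩ := ih
    exact ⟨j + 1, (mem_iterG_succ A _ _ _).2 (.inr ⟨b, hj, hs⟩)⟩

theorem wp_finite (up : X → AtomicUp X) (φ : Constr X) : (wpUpd up φ).Finite := by
  rcases φ with ⟨x, o, c⟩ | ⟨c, o, x⟩ | ⟨x, y, o, c⟩ <;> simp only [wpUpd] <;>
    split <;> first | exact Set.finite_empty | (split_ifs <;> simp)

theorem iterG_finite [Finite X] (i : ℕ) (q : Q) : (iterG A i q).Finite := by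
  induction i generalizing q with
  | zero =>
    refine Set.Finite.biUnion A.trans.finite_toSet fun t _ => Set.finite_iUnion fun _ => ?_
    refine (Finset.finite_toSet _).union (Set.Finite.biUnion ?_ fun _ _ => wp_finite _ _)
    refine (Set.finite_range fun x : X => Constr.lower 0 Ineq.le x).subset ?_
    rintro _ ⟨x, rfl⟩
    exact ⟨x, rfl⟩
  | succ i ih =>
    refine (ih q).union ?_
    refine Set.Finite.biUnion A.trans.finite_toSet fun t _ => Set.finite_iUnion fun _ => ?_
    exact Set.Finite.biUnion (ih _) fun _ _ => wp_finite _ _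

theorem no_wit {i : ℕ} (h : ∀ a, ¬ Wit A i a) {j : ℕ} (hij : i ≤ j) : ∀ a, ¬ Wit A j a := by
  induction hij with
  | refl => exact h
  | step _ ih =>
    intro b hb
    obtain ⟨a, ha, _⟩ := wit_step A _ b hb
    exact ih a ha

theorem dominated {i : ℕ} (h : ∀ a, ¬ Wit A i a) {j : ℕ} (hij : i ≤ j) (q : Q)
    (φ : Constr X) (hφ : φ ∈ iterG A j q) :
    ∃ ψ ∈ iterG A i q, shp ψ = shp φ ∧ φ.constOf ≤ ψ.constOf ∧ (φ.isDiag = true → ψ = φ) := by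
  induction hij generalizing φ with
  | refl => exact ⟨φ, hφ, rfl, le_rfl, fun _ => rfl⟩
  | @step m hm ih =>
    by_cases hφm : φ ∈ iterG A m q
    · exact ih φ hφm
    have := no_wit A h hm (q, φ)
    unfold Wit at this
    push Not at this
    obtain ⟨hd, ψ, hψ, hs, hc⟩ := this hφ hφm
    obtain ⟨ψ', h1, h2, h3, _⟩ := ih ψ hψ
    exact ⟨ψ', h1, h2.trans hs, hc.trans h3, by simp_all⟩

theorem eq_addC (φ φ' : Constr X) (ho : opOf φ' = opOf φ) (hk : keyOf φ' = keyOf φ)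
    (hu : φ.isDiag = false → isUp φ' = isUp φ) :
    φ' = addC (φ'.constOf - φ.constOf) φ ∧ shp φ = shp φ' := by
  cases φ <;> cases φ' <;>
    simp [opOf, keyOf, isUp, addC, Constr.constOf, Constr.isDiag, shp] at * <;> simp_all

end

theorem stmt15 {Q X : Type} [Fintype Q] [Fintype X] [DecidableEq X] (A : UTA Q X)
    (p : Q)
    (hred : RedAt A (1 + Fintype.card Q * (Fintype.card X * (Fintype.card X + 1))) p) :
    ¬ ∃ i : ℕ, 0 < i ∧ ∀ q, GreenAt A i q := by
  rintro ⟨i, hi, hg⟩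
  obtain ⟨i, rfl⟩ : ∃ k, i = k + 1 := ⟨i - 1, by omega⟩
  have hnw : ∀ a, ¬ Wit A i a := fun a ha => hg a.1 ((red_iff A i a.1).2 ⟨a.2, ha⟩)
  rw [add_comm, red_iff] at hred
  obtain ⟨φ0, h0⟩ := hred
  obtain ⟨f, -, hw, hs⟩ := chain A _ _ h0
  set N := Fintype.card Q * (Fintype.card X * (Fintype.card X + 1)) with hN
  -- pigeonhole
  have hcard : Fintype.card (Q × (X ⊕ (X × X))) < Fintype.card (Fin (N + 1)) := by
    simp only [Fintype.card_prod, Fintype.card_sum, Fintype.card_fin, hN]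
    apply Nat.lt_succ_of_le
    apply le_of_eq
    ring
  obtain ⟨a, b, hab, heq⟩ := Fintype.exists_ne_map_eq_of_card_lt
    (fun k : Fin (N + 1) => ((f k).1, keyOf (f k).2)) hcard
  have key : ∃ a b : ℕ, a < b ∧ b ≤ N ∧ (f a).1 = (f b).1 ∧ keyOf (f a).2 = keyOf (f b).2 := by
    simp only [Prod.mk.injEq] at heq
    rcases lt_or_gt_of_ne (fun h => hab (Fin.ext h) : (a : ℕ) ≠ b) with h | h
    · exact ⟨a, b, h, by omega, heq.1, heq.2⟩
    · exact ⟨b, a, h, by omega, heq.1.symm, heq.2.symm⟩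
  clear heq hab a b
  obtain ⟨a, b, hab, hbN, hq, hk⟩ := key
  have hstar : Relation.ReflTransGen (StepR A) (f a) (f b) := by
    have : ∀ m, a + m ≤ N → Relation.ReflTransGen (StepR A) (f a) (f (a + m)) := by
      intro m
      induction m with
      | zero => intro _; exact .refl
      | succ m ih => intro hm; exact (ih (by omega)).tail (hs (a + m) (by omega))
    have h := this (b - a) (by omega)
    rwa [show a + (b - a) = b by omega] at h
  have hop := star_op A hstar
  have hadd := eq_addC (f a).2 (f b).2 hop.1 hk.symm (fun h => (hop.2 h).2)
  have hwa := hw a (by omega)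
  have hwb := hw b hbN
  have hmem : (f a).2 ∈ iterG A b (f b).1 := by
    rw [← hq]; exact iterG_mono A (by omega) _ hwa.1
  obtain ⟨e, he⟩ : ∃ e, e = (f b).2.constOf - (f a).2.constOf := ⟨_, rfl⟩
  rw [← he] at hadd
  have hzero : addC 0 (f a).2 = (f a).2 := by cases (f a).2 <;> simp [addC]
  have he0 : e ≠ 0 := by
    rintro rfl
    apply hwb.2.1
    rw [hadd.1, hzero]
    exact hmem
  have hdiag : (f b).2.isDiag = (f a).2.isDiag := by rw [hadd.1, addC_isDiag]
  have hpos : (f a).2.isDiag = false → 0 < e := by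
    intro h
    have := hwb.2.2 (hdiag.trans h) _ hmem hadd.2
    omega
  have hok : Ok e (f a).2 := by
    cases h : (f a).2.isDiag
    · exact .inl (hpos h).le
    · exact .inr h
  have hcyc : Relation.ReflTransGen (StepR A) ((f a).1, (f a).2) ((f a).1, addC e (f a).2) := by
    have h2 : f b = ((f a).1, addC e (f a).2) := Prod.ext hq.symm hadd.1
    rw [← h2]
    exact hstar
  obtain ⟨B, hB⟩ : ∃ B : ℕ, ∀ ψ ∈ iterG A i (f a).1, ψ.constOf.natAbs ≤ B := by
    obtain ⟨B, hB⟩ := ((iterG_finite A i (f a).1).image fun ψ => ψ.constOf.natAbs).bddAbove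
    exact ⟨B, fun ψ hψ => hB ⟨ψ, hψ, rfl⟩⟩
  have hbound : ∀ n : ℕ, (f a).2.constOf + n * e ≤ B ∧
      ((f a).2.isDiag = true → -(B : ℤ) ≤ (f a).2.constOf + n * e) := by
    intro n
    obtain ⟨j, hj⟩ := star_mem A (pump A _ _ e hok hcyc n) (a + 1) hwa.1
    obtain ⟨ψ, h1, h2, h3, h4⟩ := dominated A hnw (le_max_left i j) _ _
      (iterG_mono A (le_max_right i j) _ hj)
    have h5 := hB ψ h1
    rw [addC_const _ _ (Ok_mul e _ hok n)] at h3
    refine ⟨by omega, fun hd => ?_⟩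
    have h6 : ψ = addC (n * e) (f a).2 := h4 ((addC_isDiag _ _).trans hd)
    have h7 := addC_const _ _ (Ok_mul e _ hok n)
    rw [← h6] at h7
    omega
  have hn := hbound (B + (f a).2.constOf.natAbs + 1)
  rcases lt_or_gt_of_ne he0 with h | h
  · have hd : (f a).2.isDiag = true := by
      cases h' : (f a).2.isDiag
      · have := hpos h'; omega
      · rfl
    have h2 := hn.2 hd
    push_cast at h2
    have h3 : -|(f a).2.constOf| ≤ _ := neg_abs_le _
    have h4 : (f a).2.constOf ≤ _ := le_abs_self _
    nlinarith [abs_nonneg (f a).2.constOf]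
  · have h2 := hn.1
    push_cast at h2
    have h3 : -|(f a).2.constOf| ≤ _ := neg_abs_le _
    nlinarith [abs_nonneg (f a).2.constOf]
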